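/- Let ε ∈ (0,1) and α = ε/25. Let q, p, p*, q̃, y, y* ∈ ℝ^d satisfy ‖q − p*‖ ≤ 1, ‖q − p‖ ≥ 1 + ε, ‖q̃ − q‖ ≤ α, ‖p − y‖ ≤ 4α, and ‖p* − y*‖ ≤ 4α. Then ‖q̃ − y‖ > (1 + ε/5) · ‖q̃ − y*‖. -/

import Mathlib

/-- With α = ε/25, a (1+ε)-separated instance with projected points within
4α of the clean points yields a multiplicative gap 1 + ε/5 for the noisy query. -/
theorem stmt_10 {d : ℕ} (ε : ℝ) (hε : ε ∈ Set.Ioo (0 : ℝ) 1)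
    (q p pstar qtilde y ystar : EuclideanSpace ℝ (Fin d))
    (hnear : ‖q - pstar‖ ≤ 1)
    (hfar : ‖q - p‖ ≥ 1 + ε)
    (hq : ‖qtilde - q‖ ≤ ε / 25)
    (hy : ‖p - y‖ ≤ 4 * (ε / 25))
    (hystar : ‖pstar - ystar‖ ≤ 4 * (ε / 25)) :
    ‖qtilde - y‖ > (1 + ε / 5) * ‖qtilde - ystar‖ := by
  obtain ⟨h0, h1⟩ := hε
  have hupper : ‖qtilde - ystar‖ ≤ 1 + ε / 5 := by
    have h2 := norm_sub_le_norm_sub_add_norm_sub qtilde q ystar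
    have h3 := norm_sub_le_norm_sub_add_norm_sub q pstar ystar
    linarith
  have hlower : 1 + 4 * ε / 5 ≤ ‖qtilde - y‖ := by
    have h2 := norm_sub_le_norm_sub_add_norm_sub q qtilde p
    have h3 := norm_sub_le_norm_sub_add_norm_sub qtilde y p
    rw [norm_sub_rev q qtilde] at h2
    rw [norm_sub_rev y p] at h3
    linarith
  -- `(1 + ε/5)² = 1 + 2ε/5 + ε²/25 < 1 + 4ε/5` because `0 < ε < 1`.
  have hmul := mul_le_mul_of_nonneg_left hupper (by linarith : 0 ≤ 1 + ε / 5)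
  nlinarith
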